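/- arXiv:math/0403117 — 3 statements merged into one kernel-verified Lean document; each statement's English description precedes it below -/
import Mathlib

section
/- Let N ≥ 1 and let U : 𝕋 → U_N(ℂ) be of the form U(z) = ∑_{k=0}^{D} z^k a_k with a_k ∈ M_N(ℂ) and U(z) unitary for every z ∈ 𝕋. Then there exist M ∈ ℕ, one-dimensional orthogonal projections p_1, …, p_M ∈ M_N(ℂ), and a constant unitary matrix V_0 ∈ U_N(ℂ) such that U(z) = V_0 · ∏_{i=1}^{M} (1_N − p_i + z p_i) for every z ∈ 𝕋. -/
open Polynomial in
/-- Evaluation of a polynomial matrix at a complex number. -/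
noncomputable def evM {N : ℕ} (z : ℂ) :
    Matrix (Fin N) (Fin N) ℂ[X] →+* Matrix (Fin N) (Fin N) ℂ :=
  (Polynomial.evalRingHom z).mapMatrix

open Polynomial in
/-- Constant polynomial matrix. -/
noncomputable def cM {N : ℕ} :
    Matrix (Fin N) (Fin N) ℂ →+* Matrix (Fin N) (Fin N) ℂ[X] :=
  (Polynomial.C).mapMatrix

section
open Polynomial

theorem evM_apply {N : ℕ} (z : ℂ) (A : Matrix (Fin N) (Fin N) ℂ[X]) (i j : Fin N) :
    evM z A i j = (A i j).eval z := rfl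

theorem evM_cM {N : ℕ} (z : ℂ) (A : Matrix (Fin N) (Fin N) ℂ) : evM z (cM A) = A := by
  ext i j; simp [evM, cM]

theorem evM_smul {N : ℕ} (z : ℂ) (q : ℂ[X]) (A : Matrix (Fin N) (Fin N) ℂ[X]) :
    evM z (q • A) = q.eval z • evM z A := by
  ext i j; simp [evM]

theorem det_evM {N : ℕ} (z : ℂ) (A : Matrix (Fin N) (Fin N) ℂ[X]) :
    (evM z A).det = A.det.eval z := by
  have := RingHom.map_det (Polynomial.evalRingHom z) A
  simpa [evM] using this.symm

theorem circle_infinite : {z : ℂ | ‖z‖ = 1}.Infinite := by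
  have h : Infinite Circle := by
    rw [Circle.argEquiv.infinite_iff]
    exact (Set.Ioc_infinite (by linarith [Real.pi_pos])).to_subtype
  have := Set.infinite_of_injective_forall_mem (s := {z : ℂ | ‖z‖ = 1})
    (f := fun z : Circle => (z : ℂ)) Subtype.val_injective (fun x => Circle.norm_coe x)
  exact this

open scoped ComplexOrder in
theorem exists_proj {N : ℕ} (B : Matrix (Fin N) (Fin N) ℂ) (hB : B.det = 0) :
    ∃ p : Matrix (Fin N) (Fin N) ℂ, p.conjTranspose = p ∧ p * p = p ∧ p.rank = 1 ∧ B * p = 0 := by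
  obtain ⟨v, hv, hBv⟩ := Matrix.exists_mulVec_eq_zero_iff.2 hB
  have hs : star v ⬝ᵥ v ≠ 0 := fun h => hv (dotProduct_star_self_eq_zero.1 h)
  have hstar : star (star v ⬝ᵥ v) = star v ⬝ᵥ v := by
    simp [dotProduct, mul_comm]
  have hp2 : ((star v ⬝ᵥ v)⁻¹ • Matrix.vecMulVec v (star v)) *
      ((star v ⬝ᵥ v)⁻¹ • Matrix.vecMulVec v (star v)) =
      (star v ⬝ᵥ v)⁻¹ • Matrix.vecMulVec v (star v) := by
    rw [Matrix.smul_mul, Matrix.mul_smul, Matrix.vecMulVec_mul_vecMulVec]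
    ext i j
    simp [Matrix.vecMulVec_apply]
    field_simp
    simp
  have hpv : ((star v ⬝ᵥ v)⁻¹ • Matrix.vecMulVec v (star v)).mulVec v = v := by
    rw [Matrix.smul_mulVec, Matrix.vecMulVec_mulVec]
    ext i
    simp
    field_simp
  refine ⟨(star v ⬝ᵥ v)⁻¹ • Matrix.vecMulVec v (star v), ?_, hp2, ?_, ?_⟩
  · rw [Matrix.conjTranspose_smul, Matrix.conjTranspose_vecMulVec, star_star, star_inv₀, hstar]
  · apply le_antisymm
    · rw [← Matrix.smul_vecMulVec]
      exact Matrix.rank_vecMulVec_le _ _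
    · rw [Nat.one_le_iff_ne_zero]
      intro h0
      have : ((star v ⬝ᵥ v)⁻¹ • Matrix.vecMulVec v (star v)) = 0 := by
        rw [Matrix.rank, Submodule.finrank_eq_zero, LinearMap.range_eq_bot] at h0
        exfalso
        have h5 := LinearMap.congr_fun h0 v
        rw [Matrix.mulVecLin_apply, hpv] at h5
        exact hv h5
      rw [this, Matrix.zero_mulVec] at hpv
      exact hv hpv.symm
  · rw [Matrix.mul_smul, Matrix.mul_vecMulVec, hBv, Matrix.zero_vecMulVec, smul_zero]

/-- The elementary factor. -/
noncomputable def facM {N : ℕ} (p : Matrix (Fin N) (Fin N) ℂ) : Matrix (Fin N) (Fin N) ℂ[X] :=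
  1 - cM p + (X : ℂ[X]) • cM p

theorem evM_facM {N : ℕ} (z : ℂ) (p : Matrix (Fin N) (Fin N) ℂ) :
    evM z (facM p) = 1 - p + z • p := by
  simp [facM, evM_smul, evM_cM]

theorem fac_unitary {N : ℕ} (p : Matrix (Fin N) (Fin N) ℂ) (h1 : p.conjTranspose = p)
    (h2 : p * p = p) (z : ℂ) (hz : ‖z‖ = 1) :
    1 - p + z • p ∈ Matrix.unitaryGroup (Fin N) ℂ := by
  rw [Matrix.mem_unitaryGroup_iff, Matrix.star_eq_conjTranspose]
  have hzz : z * star z = 1 := by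
    have := Complex.mul_conj z
    rw [Complex.normSq_eq_norm_sq, hz] at this
    simpa using this
  simp only [Matrix.conjTranspose_add, Matrix.conjTranspose_sub, Matrix.conjTranspose_smul, h1,
    Matrix.conjTranspose_one, mul_add, add_mul, mul_sub, sub_mul, Matrix.smul_mul,
    Matrix.mul_smul, h2, smul_smul, hzz, mul_comm (star z) z, mul_one, one_mul, one_smul]
  abel

/-- The polynomial `conj p` reflected. -/
theorem eval_reflect_star (D : ℕ) (q : ℂ[X]) (hq : q.natDegree ≤ D) (z : ℂ) (hz : ‖z‖ = 1) :
    ((q.map (starRingEnd ℂ)).reflect D).eval z = z ^ D * star (q.eval z) := by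
  have hz0 : z ≠ 0 := by rintro rfl; simp at hz
  have hzz : z * star z = 1 := by
    have := Complex.mul_conj z
    rw [Complex.normSq_eq_norm_sq, hz] at this
    simpa using this
  have hinv : z⁻¹ = star z := inv_eq_of_mul_eq_one_right hzz
  letI : Invertible (z⁻¹) := invertibleOfNonzero (inv_ne_zero hz0)
  have h := eval₂_reflect_mul_pow (RingHom.id ℂ) (z⁻¹) D (q.map (starRingEnd ℂ))
    (by simpa using hq)
  rw [invOf_eq_inv, inv_inv, hinv, ← eval, ← eval] at h
  have h3 : (q.map (starRingEnd ℂ)).eval (star z) = star (q.eval z) := by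
    have := Polynomial.eval_map_apply (f := starRingEnd ℂ) (p := q) z
    simpa using this
  rw [h3] at h
  rw [← h]
  calc _ = (z * star z) ^ D * eval z ((q.map (starRingEnd ℂ)).reflect D) := by rw [hzz]; simp
    _ = _ := by rw [mul_pow]; ring

theorem const_case {N : ℕ} (A : Matrix (Fin N) (Fin N) ℂ[X])
    (hA : ∀ z : ℂ, ‖z‖ = 1 → evM z A ∈ Matrix.unitaryGroup (Fin N) ℂ)
    (h0 : (evM 0 A).det ≠ 0) : ∀ i j, (A i j).natDegree = 0 := by
  by_contra! hne
  obtain ⟨i₀, j₀, hij⟩ := hne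
  obtain ⟨⟨i₁, j₁⟩, -, hmax⟩ := Finset.exists_max_image (Finset.univ : Finset (Fin N × Fin N))
    (fun x => (A x.1 x.2).natDegree) ⟨(i₀, j₀), Finset.mem_univ _⟩
  set D := (A i₁ j₁).natDegree with hD
  have hle : ∀ i j, (A i j).natDegree ≤ D := fun i j => hmax (i, j) (Finset.mem_univ _)
  have hDpos : D ≠ 0 := by have := hle i₀ j₀; omega
  let B : Matrix (Fin N) (Fin N) ℂ[X] :=
    fun i j => ((A j i).map (starRingEnd ℂ)).reflect D
  have hBA : B * A = (X ^ D : ℂ[X]) • (1 : Matrix (Fin N) (Fin N) ℂ[X]) := by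
    ext1 i j
    apply Polynomial.eq_of_infinite_eval_eq
    apply circle_infinite.mono
    intro z hz
    have hz : ‖z‖ = 1 := hz
    have hB : evM z B = z ^ D • star (evM z A) := by
      ext i j
      rw [evM_apply, eval_reflect_star D _ (hle j i) z hz]
      simp [evM_apply]
    have : evM z (B * A) = evM z ((X ^ D : ℂ[X]) • (1 : Matrix (Fin N) (Fin N) ℂ[X])) := by
      rw [map_mul, hB, evM_smul, map_one, Matrix.smul_mul,
        (Matrix.mem_unitaryGroup_iff').1 (hA z hz)]
      simp
    exact congrFun (congrFun this i) j
  have h1 := congrArg (evM 0) hBA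
  rw [map_mul, evM_smul, eval_pow, eval_X, zero_pow hDpos, zero_smul] at h1
  have hu : IsUnit (evM 0 A) := (Matrix.isUnit_iff_isUnit_det _).2 (isUnit_iff_ne_zero.2 h0)
  have h2 : evM 0 B = 0 := hu.mul_left_eq_zero.1 h1
  have h3 := congrFun (congrFun h2 j₁) i₁
  rw [evM_apply, ← coeff_zero_eq_eval_zero, coeff_reflect, revAt_zero, coeff_map] at h3
  have h4 : (A i₁ j₁).leadingCoeff = 0 := by simpa [hD] using h3
  rw [leadingCoeff_eq_zero] at h4
  rw [hD, h4] at hDpos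
  simp at hDpos

theorem main_aux {N : ℕ} (n : ℕ) : ∀ A : Matrix (Fin N) (Fin N) ℂ[X],
    (∀ z : ℂ, ‖z‖ = 1 → evM z A ∈ Matrix.unitaryGroup (Fin N) ℂ) → A.det.natDegree = n →
    ∃ (l : List (Matrix (Fin N) (Fin N) ℂ)) (V₀ : Matrix (Fin N) (Fin N) ℂ),
      V₀ ∈ Matrix.unitaryGroup (Fin N) ℂ ∧
      (∀ p ∈ l, p.conjTranspose = p ∧ p * p = p ∧ p.rank = 1) ∧
      ∀ z : ℂ, ‖z‖ = 1 →
        evM z A = V₀ * (l.map (fun p => (1 : Matrix (Fin N) (Fin N) ℂ) - p + z • p)).prod := by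
  induction n using Nat.strong_induction_on with
  | _ n ih =>
  intro A hA hn
  by_cases h0 : (evM 0 A).det = 0
  · obtain ⟨p, hp1, hp2, hp3, hp4⟩ := exists_proj _ h0
    have hcp : cM p * cM p = cM p := by rw [← map_mul, hp2]
    let B : Matrix (Fin N) (Fin N) ℂ[X] := fun i j => ((A * cM p) i j).divX
    have hXB : (X : ℂ[X]) • B = A * cM p := by
      ext1 i j
      have h := congrFun (congrFun (show evM 0 (A * cM p) = 0 by
        rw [map_mul, evM_cM, hp4]) i) j
      rw [evM_apply, ← coeff_zero_eq_eval_zero] at h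
      have h2 := X_mul_divX_add ((A * cM p) i j)
      rw [h] at h2
      simpa using h2
    have hBp : B * cM p = B := by
      have : (X : ℂ[X]) • (B * cM p) = (X : ℂ[X]) • B := by
        rw [← Matrix.smul_mul, hXB, mul_assoc, hcp]
      exact smul_right_injective _ X_ne_zero this
    have hfac : (A * (1 - cM p) + B) * facM p = A := by
      have e1 : A * (1 - cM p) * facM p = A * (1 - cM p) := by
        simp [facM, mul_assoc, mul_add, mul_sub, sub_mul, hcp]
      have e2 : B * facM p = A * cM p := by
        simp [facM, mul_add, mul_sub, hBp, hXB]
      rw [add_mul, e1, e2, mul_sub, mul_one, sub_add_cancel]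
    have hdet := congrArg Matrix.det hfac
    rw [Matrix.det_mul] at hdet
    have hdetA : A.det ≠ 0 := by
      intro h
      have h1 := (Matrix.UnitaryGroup.det_isUnit ⟨_, hA 1 (by simp)⟩)
      simp [det_evM, h] at h1
    have hl : (A * (1 - cM p) + B).det ≠ 0 := by
      intro h; rw [h, zero_mul] at hdet; exact hdetA hdet.symm
    have hr : (facM p).det ≠ 0 := by
      intro h; rw [h, mul_zero] at hdet; exact hdetA hdet.symm
    have hr2 : (facM p).det.natDegree ≠ 0 := by
      intro h
      rw [natDegree_eq_zero] at h
      obtain ⟨c, hc⟩ := h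
      have h1 := det_evM 0 (facM p)
      rw [evM_facM, ← hc, eval_C, zero_smul, add_zero] at h1
      have h2 : (1 - p).det = 0 := by
        by_contra hne
        have hu : IsUnit (1 - p) := (Matrix.isUnit_iff_isUnit_det _).2 (isUnit_iff_ne_zero.2 hne)
        have h3 : (1 - p) * p = 0 := by rw [sub_mul, one_mul, hp2, sub_self]
        have h4 := hu.mul_right_eq_zero.1 h3
        rw [h4] at hp3
        simp at hp3
      rw [h2] at h1
      rw [← h1] at hc
      simp at hc
      exact hr hc.symm
    have hdeg := natDegree_mul hl hr
    rw [hdet, hn] at hdeg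
    obtain ⟨l, V₀, hV, hlp, hprod⟩ := ih _ (by omega) (A * (1 - cM p) + B) (by
      intro z hz
      have hf := fac_unitary p hp1 hp2 z hz
      have h1 := congrArg (evM z) hfac
      rw [map_mul, evM_facM] at h1
      have h2 : evM z (A * (1 - cM p) + B) = evM z A * star (1 - p + z • p) := by
        rw [← h1, mul_assoc, Matrix.mem_unitaryGroup_iff.1 hf, mul_one]
      rw [h2]
      exact mul_mem (hA z hz) (Unitary.star_mem hf)) rfl
    refine ⟨l ++ [p], V₀, hV, ?_, ?_⟩
    · intro q hq
      rcases List.mem_append.1 hq with hq | hq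
      · exact hlp q hq
      · rw [List.mem_singleton.1 hq]; exact ⟨hp1, hp2, hp3⟩
    · intro z hz
      have h1 := congrArg (evM z) hfac
      rw [map_mul, evM_facM, hprod z hz] at h1
      rw [← h1]
      simp [mul_assoc]
  · have hc := const_case A hA h0
    refine ⟨[], evM 1 A, hA 1 (by simp), by simp, ?_⟩
    intro z hz
    simp only [List.map_nil, List.prod_nil, mul_one]
    ext i j
    rw [evM_apply, evM_apply, eq_C_of_natDegree_eq_zero (hc i j)]
    simp

end


/- STATEMENT 2: Every unitary-valued polynomial matrix function on the circle factors as a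
constant unitary `V₀` times an ordered product of factors `1_N − pᵢ + z pᵢ`, where the `pᵢ`
are one-dimensional orthogonal projections. -/
theorem stmt2 (N D : ℕ) (hN : 1 ≤ N)
    (U : ℂ → Matrix (Fin N) (Fin N) ℂ) (a : ℕ → Matrix (Fin N) (Fin N) ℂ)
    (hform : ∀ z : ℂ, ‖z‖ = 1 → U z = ∑ k ∈ Finset.range (D + 1), z ^ k • a k)
    (hunit : ∀ z : ℂ, ‖z‖ = 1 → U z ∈ Matrix.unitaryGroup (Fin N) ℂ) :
    ∃ (M : ℕ) (p : Fin M → Matrix (Fin N) (Fin N) ℂ) (V₀ : Matrix (Fin N) (Fin N) ℂ),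
      V₀ ∈ Matrix.unitaryGroup (Fin N) ℂ ∧
      (∀ i, (p i).conjTranspose = p i ∧ p i * p i = p i ∧ (p i).rank = 1) ∧
      ∀ z : ℂ, ‖z‖ = 1 →
        U z = V₀ *
          (List.ofFn (fun i : Fin M =>
            (1 : Matrix (Fin N) (Fin N) ℂ) - p i + z • p i)).prod := by
  let A : Matrix (Fin N) (Fin N) (Polynomial ℂ) :=
    ∑ k ∈ Finset.range (D + 1), (Polynomial.X ^ k : Polynomial ℂ) • cM (a k)
  have hAU : ∀ z : ℂ, ‖z‖ = 1 → evM z A = U z := by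
    intro z hz
    rw [hform z hz, map_sum]
    refine Finset.sum_congr rfl fun k _ => ?_
    rw [evM_smul, evM_cM]
    simp
  obtain ⟨l, V₀, hV, hl, hprod⟩ := main_aux _ A
    (fun z hz => by rw [hAU z hz]; exact hunit z hz) rfl
  refine ⟨l.length, fun i => l[i], V₀, hV, fun i => hl _ (List.getElem_mem _), ?_⟩
  intro z hz
  rw [← hAU z hz, hprod z hz]
  congr 2
  exact (List.ofFn_getElem_eq_map l _).symm
end

section
/- Let N ≥ 2 and let m_0, …, m_{N−1} : 𝕋 → ℂ be continuous functions. For each j define the bounded operator S_j on L²(𝕋, μ) (μ the normalized Haar measure on the circle) by (S_j f)(z) = m_j(z) f(z^N). Then the following are equivalent: (i) the operators satisfy the Cuntz relations S_j* S_k = δ_{j,k} I for all j, k ∈ {0,…,N−1} and ∑_{j=0}^{N−1} S_j S_j* = I; (ii) for every z ∈ 𝕋 and all j, k ∈ {0,…,N−1}, ∑_{w ∈ 𝕋, w^N = z} conj(m_j(w)) · m_k(w) = N δ_{j,k}. -/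
open MeasureTheory

noncomputable instance : MeasurableSpace Circle := borel Circle
instance : BorelSpace Circle := ⟨rfl⟩


/-- Enumeration of the `N`-th roots of unity on the circle. -/
lemma aux_roots (N : ℕ) (hN : 2 ≤ N) : ∃ ζ : Fin N → Circle, Function.Injective ζ ∧
    ∀ u : Circle, u ^ N = 1 ↔ ∃ i, ζ i = u := by
  have : NeZero N := ⟨by omega⟩
  have e : Fin N ≃ ZMod N := Fintype.equivOfCardEq (by simp [ZMod.card])
  refine ⟨fun i => ZMod.toCircle (e i), ZMod.injective_toCircle.comp e.injective, fun u => ⟨?_, ?_⟩⟩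
  · intro hu
    obtain ⟨x, hx⟩ := (bijective_rootsOfUnityAddChar N).2
      ⟨toUnits u, by ext; simp [hu]⟩
    refine ⟨e.symm x, ?_⟩
    have := congrArg (fun y : rootsOfUnity N Circle => ((y : Circleˣ) : Circle)) hx
    simpa using this
  · rintro ⟨i, rfl⟩
    simp [← AddChar.map_nsmul_eq_pow]

lemma aux_surj (N : ℕ) (hN : 2 ≤ N) : Function.Surjective (fun w : Circle => w ^ N) := by
  intro z
  obtain ⟨t, ht⟩ := Circle.exp_surjective z
  have hN0 : (N : ℝ) ≠ 0 := by positivity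
  refine ⟨Circle.exp (t / N), ?_⟩
  simp only [← Circle.exp_nsmul, ← ht]
  congr 1
  rw [nsmul_eq_mul]
  field_simp

lemma aux_mp (N : ℕ) (hN : 2 ≤ N) (μ : Measure Circle) [μ.IsHaarMeasure]
    [IsProbabilityMeasure μ] : MeasurePreserving (fun w : Circle => w ^ N) μ μ :=
  (powMonoidHom N : Circle →* Circle).measurePreserving (μ := μ) (continuous_pow N)
    (aux_surj N hN) rfl

lemma aux_fsum (N : ℕ) (ζ : Fin N → Circle) (hinj : Function.Injective ζ)
    (hζ : ∀ u : Circle, u ^ N = 1 ↔ ∃ i, ζ i = u) (F : Circle → ℂ) (w : Circle) :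
    ∑ᶠ v ∈ {v : Circle | v ^ N = w ^ N}, F v = ∑ i, F (ζ i * w) := by
  have hset : {v : Circle | v ^ N = w ^ N} = Set.range (fun i => ζ i * w) := by
    ext v
    have := hζ (v * w⁻¹)
    simp only [Set.mem_ofPred_eq, Set.mem_range]
    rw [mul_pow, inv_pow, mul_inv_eq_one] at this
    rw [this]
    simp only [eq_mul_inv_iff_mul_eq]
  rw [hset, finsum_mem_range, finsum_eq_sum_of_fintype]
  intro a b hab
  exact hinj (mul_right_cancel hab)

lemma aux_cont (N : ℕ) (hN : 2 ≤ N) (F : Circle → ℂ) (hF : Continuous F) :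
    Continuous (fun z : Circle => ∑ᶠ v ∈ {v : Circle | v ^ N = z}, F v) := by
  obtain ⟨ζ, hinj, hζ⟩ := aux_roots N hN
  rw [(Topology.IsQuotientMap.of_surjective_continuous (aux_surj N hN)
    (continuous_pow N)).continuous_iff]
  have : (fun z : Circle => ∑ᶠ v ∈ {v : Circle | v ^ N = z}, F v) ∘ (fun w : Circle => w ^ N)
      = fun w => ∑ i, F (ζ i * w) := by
    funext w
    exact aux_fsum N ζ hinj hζ F w
  rw [this]
  fun_prop

lemma aux_bdd_mul (μ : Measure Circle) [IsFiniteMeasure μ] (F G : Circle → ℂ) (hF : Continuous F)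
    (hG : Integrable G μ) : Integrable (fun z => F z * G z) μ := by
  obtain ⟨C, hC⟩ := (isCompact_range hF).isBounded.exists_norm_le
  exact hG.bdd_mul (c := C) hF.aestronglyMeasurable
    (Filter.Eventually.of_forall fun x => hC _ ⟨x, rfl⟩)

lemma aux_key (N : ℕ) (hN : 2 ≤ N) (μ : Measure Circle) [μ.IsHaarMeasure]
    [IsProbabilityMeasure μ] (F G : Circle → ℂ) (hF : Continuous F) (hG : Integrable G μ) :
    (N : ℂ) * ∫ w, F w * G (w ^ N) ∂μ
      = ∫ z, (∑ᶠ v ∈ {v : Circle | v ^ N = z}, F v) * G z ∂μ := by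
  obtain ⟨ζ, hinj, hζ⟩ := aux_roots N hN
  have hmp := aux_mp N hN μ
  have hG' : Integrable (fun w : Circle => G (w ^ N)) μ := hmp.integrable_comp_of_integrable hG
  have hI := aux_bdd_mul μ _ G (aux_cont N hN F hF) hG
  have h1 : ∫ z, (∑ᶠ v ∈ {v : Circle | v ^ N = z}, F v) * G z ∂μ
      = ∫ w, (∑ i, F (ζ i * w)) * G (w ^ N) ∂μ := by
    rw [← hmp.map_eq, integral_map hmp.aemeasurable (by rw [hmp.map_eq]; exact hI.1), hmp.map_eq]
    simp only [aux_fsum N ζ hinj hζ]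
  rw [h1]
  simp only [Finset.sum_mul]
  rw [integral_finsetSum]
  · have : ∀ i, ∫ w, F (ζ i * w) * G (w ^ N) ∂μ = ∫ w, F w * G (w ^ N) ∂μ := by
      intro i
      rw [← integral_mul_left_eq_self (fun w => F w * G (w ^ N)) (ζ i)]
      simp only [mul_pow, (hζ (ζ i)).2 ⟨i, rfl⟩, one_mul]
    simp [this]
  · intro i _
    exact aux_bdd_mul μ (fun w => F (ζ i * w)) _ (by fun_prop) hG'

lemma aux_inner (N : ℕ) (hN : 2 ≤ N) (μ : Measure Circle) [μ.IsHaarMeasure]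
    [IsProbabilityMeasure μ]
    (m : Fin N → Circle → ℂ) (hm : ∀ j, Continuous (m j))
    (S : Fin N → (Lp ℂ 2 μ →L[ℂ] Lp ℂ 2 μ))
    (hS : ∀ (j : Fin N) (f : Lp ℂ 2 μ),
      (S j f : Circle → ℂ) =ᵐ[μ] fun z => m j z * (f : Circle → ℂ) (z ^ N))
    (j k : Fin N) (f g : Lp ℂ 2 μ) :
    (N : ℂ) * inner ℂ (S j f) (S k g) =
      ∫ z, (∑ᶠ w ∈ {w : Circle | w ^ N = z}, (starRingEnd ℂ) (m j w) * m k w)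
        * inner ℂ (f z) (g z) ∂μ := by
  have hc : Continuous (fun w => (starRingEnd ℂ) (m j w) * m k w) := by
    have := hm j
    have := hm k
    fun_prop
  rw [← aux_key N hN μ (fun w => (starRingEnd ℂ) (m j w) * m k w)
    (fun z => inner ℂ (f z) (g z)) hc (L2.integrable_inner f g), L2.inner_def]
  congr 1
  apply integral_congr_ae
  filter_upwards [hS j f, hS k g] with z h1 h2
  rw [h1, h2]
  simp only [RCLike.inner_apply, map_mul]
  ring

theorem stmt3 (N : ℕ) (hN : 2 ≤ N) (μ : Measure Circle) [μ.IsHaarMeasure]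
    [IsProbabilityMeasure μ]
    (m : Fin N → Circle → ℂ) (hm : ∀ j, Continuous (m j))
    (S : Fin N → (Lp ℂ 2 μ →L[ℂ] Lp ℂ 2 μ))
    (hS : ∀ (j : Fin N) (f : Lp ℂ 2 μ),
      (S j f : Circle → ℂ) =ᵐ[μ] fun z => m j z * (f : Circle → ℂ) (z ^ N)) :
    ((∀ j k : Fin N, ContinuousLinearMap.adjoint (S j) ∘L S k
        = if j = k then (1 : Lp ℂ 2 μ →L[ℂ] Lp ℂ 2 μ) else 0) ∧
      ∑ j : Fin N, S j ∘L ContinuousLinearMap.adjoint (S j)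
        = (1 : Lp ℂ 2 μ →L[ℂ] Lp ℂ 2 μ)) ↔
    (∀ (z : Circle) (j k : Fin N),
      ∑ᶠ w ∈ {w : Circle | w ^ N = z}, (starRingEnd ℂ) (m j w) * m k w
        = (N : ℂ) * (if j = k then 1 else 0)) := by
  have hN0 : (N : ℂ) ≠ 0 := by
    have : N ≠ 0 := by omega
    exact_mod_cast this
  have hc : ∀ j k, Continuous (fun w => (starRingEnd ℂ) (m j w) * m k w) := by
    intro j k
    have := hm j
    have := hm k
    fun_prop
  have hin := aux_inner N hN μ m hm S hS
  constructor
  · rintro ⟨h1, -⟩ z j k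
    set c : ℂ := (N : ℂ) * (if j = k then 1 else 0) with hcdef
    let h : Circle → ℂ := fun z =>
      ∑ᶠ w ∈ {w : Circle | w ^ N = z}, (starRingEnd ℂ) (m j w) * m k w
    have hh : Continuous h := aux_cont N hN _ (hc j k)
    have hIn : ∀ f g : Lp ℂ 2 μ, (N : ℂ) * inner ℂ (S j f) (S k g) = c * inner ℂ f g := by
      intro f g
      rw [← ContinuousLinearMap.adjoint_inner_right, ← ContinuousLinearMap.comp_apply, h1 j k,
        hcdef]
      split_ifs <;> simp
    let f : Lp ℂ 2 μ := ContinuousMap.toLp 2 μ ℂ (1 : C(Circle, ℂ))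
    let gc : C(Circle, ℂ) := ⟨fun z => (starRingEnd ℂ) (h z - c), by fun_prop⟩
    let g : Lp ℂ 2 μ := ContinuousMap.toLp 2 μ ℂ gc
    have hf : (f : Circle → ℂ) =ᵐ[μ] (1 : C(Circle, ℂ)) := ContinuousMap.coeFn_toLp μ 1
    have hg : (g : Circle → ℂ) =ᵐ[μ] gc := ContinuousMap.coeFn_toLp μ gc
    have e1 := (hin j k f g).symm.trans (hIn f g)
    rw [L2.inner_def, ← integral_const_mul] at e1
    have hfg := L2.integrable_inner (𝕜 := ℂ) f g
    have e2 := integral_sub (aux_bdd_mul μ h _ hh hfg)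
      (aux_bdd_mul μ (fun _ => c) _ continuous_const hfg)
    rw [sub_eq_zero.2 e1] at e2
    have e3 : ∫ z, ((‖h z - c‖ ^ 2 : ℝ) : ℂ) ∂μ = 0 := by
      rw [← e2]
      apply integral_congr_ae
      filter_upwards [hf, hg] with z hz1 hz2
      rw [hz1, hz2]
      have := Complex.mul_conj' (h z - c)
      simp only [RCLike.inner_apply, gc, ContinuousMap.coe_mk, ContinuousMap.one_apply, map_one,
        mul_one]
      push_cast
      rw [← this]
      ring
    rw [integral_complex_ofReal, Complex.ofReal_eq_zero] at e3
    have hcs : Continuous (fun z => ‖h z - c‖ ^ 2) := by fun_prop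
    by_contra hne
    have hpos := hcs.integral_pos_of_hasCompactSupport_nonneg_nonzero (μ := μ) (x := z)
      (HasCompactSupport.of_compactSpace _) (fun z => by positivity)
      (pow_ne_zero 2 (norm_ne_zero_iff.2 (sub_ne_zero.2 hne)))
    exact hpos.ne' e3
  · intro h
    have hfirst : ∀ j k : Fin N, ContinuousLinearMap.adjoint (S j) ∘L S k
        = if j = k then (1 : Lp ℂ 2 μ →L[ℂ] Lp ℂ 2 μ) else 0 := by
      intro j k
      ext1 g
      apply ext_inner_left ℂ
      intro f
      rw [ContinuousLinearMap.comp_apply, ContinuousLinearMap.adjoint_inner_right]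
      apply mul_left_cancel₀ hN0
      rw [hin j k f g]
      simp only [h]
      rw [integral_const_mul, ← L2.inner_def]
      split_ifs <;> simp
    refine ⟨hfirst, ?_⟩
    obtain ⟨ζ, hinj, hζ⟩ := aux_roots N hN
    -- pointwise dual relation
    have hdual : ∀ (w : Circle) (a b : Fin N),
        ∑ j, m j (ζ a * w) * (starRingEnd ℂ) (m j (ζ b * w)) = if a = b then (N : ℂ) else 0 := by
      intro w a b
      let A : Matrix (Fin N) (Fin N) ℂ :=
        Matrix.of fun j i => (N : ℂ)⁻¹ * (starRingEnd ℂ) (m j (ζ i * w))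
      let B : Matrix (Fin N) (Fin N) ℂ := Matrix.of fun i k => m k (ζ i * w)
      have hAB : A * B = 1 := by
        ext j k
        have := h (w ^ N) j k
        rw [aux_fsum N ζ hinj hζ] at this
        simp only [A, B, Matrix.mul_apply, Matrix.of_apply, Matrix.one_apply, mul_assoc]
        rw [← Finset.mul_sum, this, ← mul_assoc, inv_mul_cancel₀ hN0, one_mul]
      have hBA := mul_eq_one_comm.1 hAB
      have := congrFun (congrFun hBA a) b
      simp only [A, B, Matrix.mul_apply, Matrix.of_apply, Matrix.one_apply] at this
      calc ∑ j, m j (ζ a * w) * (starRingEnd ℂ) (m j (ζ b * w))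
          = N * ∑ j, m j (ζ a * w) * ((N : ℂ)⁻¹ * (starRingEnd ℂ) (m j (ζ b * w))) := by
            rw [Finset.mul_sum]
            refine Finset.sum_congr rfl fun j _ => ?_
            field_simp
        _ = _ := by rw [this]; split_ifs <;> simp
    obtain ⟨i0, hi0⟩ := (hζ 1).1 (one_pow N)
    have hdense := ContinuousMap.toLp_denseRange (E := ℂ) (p := 2) μ ℂ (by simp)
    apply ContinuousLinearMap.coeFn_injective
    refine Continuous.ext_on hdense (ContinuousLinearMap.continuous _)
      (ContinuousLinearMap.continuous _) ?_
    rintro _ ⟨φ, rfl⟩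
    have hφc : ∀ j, Continuous (fun w => (starRingEnd ℂ) (m j w) * φ w) := by
      intro j
      have := hm j
      fun_prop
    let gc : Fin N → C(Circle, ℂ) := fun j =>
      ⟨fun z => (N : ℂ)⁻¹ * ∑ᶠ w ∈ {w : Circle | w ^ N = z}, (starRingEnd ℂ) (m j w) * φ w,
        continuous_const.mul (aux_cont N hN _ (hφc j))⟩
    let g : Fin N → Lp ℂ 2 μ := fun j => ContinuousMap.toLp 2 μ ℂ (gc j)
    have hg : ∀ j, (g j : Circle → ℂ) =ᵐ[μ] gc j := fun j => ContinuousMap.coeFn_toLp μ (gc j)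
    have hrep : ContinuousMap.toLp 2 μ ℂ φ = ∑ j, S j (g j) := by
      apply Lp.ext
      have hsum : ((∑ j, S j (g j) : Lp ℂ 2 μ) : Circle → ℂ) =ᵐ[μ] fun z => ∑ j, (S j (g j)) z :=
        Lp.coeFn_fun_finsetSum _ _
      have hall : ∀ᵐ z ∂μ, ∀ j, (S j (g j)) z = m j z * gc j (z ^ N) := by
        rw [ae_all_iff]
        intro j
        filter_upwards [hS j (g j), (aux_mp N hN μ).quasiMeasurePreserving.ae (hg j)] with z h1 h2
        rw [h1, h2]
      filter_upwards [hsum, hall, ContinuousMap.coeFn_toLp (𝕜 := ℂ) (p := 2) μ φ] with z h1 h2 h3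
      rw [h1, h3]
      simp only [h2, gc, ContinuousMap.coe_mk, aux_fsum N ζ hinj hζ]
      have hd := hdual z i0
      simp only [hi0, one_mul] at hd
      calc φ z = (N : ℂ)⁻¹ * ∑ i, (if i0 = i then (N : ℂ) else 0) * φ (ζ i * z) := by
            simp [hi0, hN0]
        _ = (N : ℂ)⁻¹ * ∑ i, ∑ j, m j z * (starRingEnd ℂ) (m j (ζ i * z)) * φ (ζ i * z) := by
            simp only [← hd, Finset.sum_mul]
        _ = _ := by
            rw [Finset.sum_comm, Finset.mul_sum]
            refine Finset.sum_congr rfl fun j _ => ?_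
            simp only [Finset.mul_sum]
            refine Finset.sum_congr rfl fun i _ => ?_
            ring
    rw [hrep]
    have hkey : ∀ j, ContinuousLinearMap.adjoint (S j) (∑ k, S k (g k)) = g j := by
      intro j
      rw [map_sum]
      have : ∀ k, ContinuousLinearMap.adjoint (S j) (S k (g k)) = if j = k then g k else 0 := by
        intro k
        rw [← ContinuousLinearMap.comp_apply, hfirst]
        split_ifs <;> simp
      simp [this]
    simp [hkey, -map_sum]
end

section
/- Let R = ℂ[z, z^{−1}] be the ring of Laurent polynomials over ℂ, and let A be a 2×2 matrix over R with det A = 1 (the constant Laurent polynomial 1). Then there exist m ∈ ℕ, a nonzero constant K ∈ ℂ \ {0}, and Laurent polynomials u_1, …, u_m, l_1, …, l_m ∈ R such that A = diag(K, K^{−1}) · ∏_{i=1}^{m} ( [[1, 0], [l_i, 1]] · [[1, u_i], [0, 1]] ), where the product is taken in order i = 1, …, m. -/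
/-- A lower unipotent times an upper unipotent matrix. -/
noncomputable def liftStep (x : LaurentPolynomial ℂ × LaurentPolynomial ℂ) :
    Matrix (Fin 2) (Fin 2) (LaurentPolynomial ℂ) :=
  (!![1, 0; x.1, 1] : Matrix (Fin 2) (Fin 2) (LaurentPolynomial ℂ)) *
    (!![1, x.2; 0, 1] : Matrix (Fin 2) (Fin 2) (LaurentPolynomial ℂ))

/-- Products of lifting steps. -/
def IsLift (A : Matrix (Fin 2) (Fin 2) (LaurentPolynomial ℂ)) : Prop :=
  ∃ L : List (LaurentPolynomial ℂ × LaurentPolynomial ℂ), A = (L.map liftStep).prod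

theorem IsLift.mul {A B : Matrix (Fin 2) (Fin 2) (LaurentPolynomial ℂ)}
    (hA : IsLift A) (hB : IsLift B) : IsLift (A * B) := by
  obtain ⟨L, rfl⟩ := hA
  obtain ⟨M, rfl⟩ := hB
  exact ⟨L ++ M, by simp⟩

theorem isLift_upper (x : LaurentPolynomial ℂ) : IsLift !![1, x; 0, 1] :=
  ⟨[(0, x)], by simp [liftStep, ← Matrix.one_fin_two]⟩

theorem isLift_lower (x : LaurentPolynomial ℂ) : IsLift !![1, 0; x, 1] :=
  ⟨[(x, 0)], by simp [liftStep, ← Matrix.one_fin_two]⟩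

theorem isLift_main (p q : Polynomial ℂ) :
    ∀ (v w : LaurentPolynomial ℂ), IsUnit v → IsUnit w → ∀ b c d : LaurentPolynomial ℂ,
      b = Polynomial.toLaurent q * w →
      Polynomial.toLaurent p * v * d - b * c = 1 →
      IsLift !![Polynomial.toLaurent p * v, b; c, d] := by
  induction p, q using EuclideanDomain.GCD.induction with
  | H0 q =>
    intro v w hv hw b c d hb hdet
    have hbc : b * c = -1 := by
      simp only [map_zero, zero_mul, zero_sub] at hdet
      linear_combination -hdet
    have h := ((isLift_upper b).mul (isLift_lower c)).mul (isLift_upper (b - b * d))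
    convert h using 1
    ext1 i j
    fin_cases i <;> fin_cases j <;> simp [Matrix.mul_apply, Fin.sum_univ_two]
    · linear_combination -hbc
    · exact Or.inl (by linear_combination hbc)
    · linear_combination (d - 1) * hbc
  | H1 p q hp ih =>
    intro v w hv hw b c d hb hdet
    obtain ⟨v', rfl⟩ := hv
    set a := Polynomial.toLaurent p * (v' : LaurentPolynomial ℂ) with ha
    set x := Polynomial.toLaurent (q / p) * (↑v'⁻¹ : LaurentPolynomial ℂ) * w with hx
    have hq : Polynomial.toLaurent q =
        Polynomial.toLaurent p * Polynomial.toLaurent (q / p) + Polynomial.toLaurent (q % p) := by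
      rw [← map_mul, ← map_add, EuclideanDomain.div_add_mod]
    have hr : Polynomial.toLaurent (q % p) * w = b - a * x := by
      have hvv : (v' : LaurentPolynomial ℂ) * (↑v'⁻¹ : LaurentPolynomial ℂ) = 1 := by simp
      rw [hb, ha, hx, hq]
      linear_combination Polynomial.toLaurent p * Polynomial.toLaurent (q / p) * w * hvv
    have h := ih w (-v') hw v'.isUnit.neg (-a) (d - c * x) (-c) (by rw [ha]; ring)
      (by rw [hr]; linear_combination hdet)
    rw [hr] at h
    have h2 := (((h.mul (isLift_upper 1)).mul (isLift_lower (-1))).mul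
      (isLift_upper 1)).mul (isLift_upper x)
    convert h2 using 1
    ext1 i j
    fin_cases i <;> fin_cases j <;> simp [Matrix.mul_apply, Fin.sum_univ_two] <;> ring

theorem stmt14 (A : Matrix (Fin 2) (Fin 2) (LaurentPolynomial ℂ)) (hA : A.det = 1) :
    ∃ (m : ℕ) (K : ℂ), K ≠ 0 ∧
      ∃ u l : Fin m → LaurentPolynomial ℂ,
        A = Matrix.diagonal ![LaurentPolynomial.C K, LaurentPolynomial.C K⁻¹] *
          (List.ofFn (fun i : Fin m =>
            (!![1, 0; l i, 1] : Matrix (Fin 2) (Fin 2) (LaurentPolynomial ℂ)) *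
              (!![1, u i; 0, 1] : Matrix (Fin 2) (Fin 2) (LaurentPolynomial ℂ)))).prod := by
  have key : ∀ f : LaurentPolynomial ℂ, ∃ (p : Polynomial ℂ) (v : LaurentPolynomial ℂ),
      IsUnit v ∧ f = Polynomial.toLaurent p * v := by
    intro f
    obtain ⟨n, p, hp⟩ := LaurentPolynomial.exists_T_pow f
    refine ⟨p, LaurentPolynomial.T (-n), LaurentPolynomial.isUnit_T _, ?_⟩
    rw [hp, LaurentPolynomial.mul_T_assoc]
    simp
  obtain ⟨p, v, hv, hp⟩ := key (A 0 0)
  obtain ⟨q, w, hw, hq⟩ := key (A 0 1)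
  have h := isLift_main p q v w hv hw (A 0 1) (A 1 0) (A 1 1) hq
    (by rw [← hp, ← Matrix.det_fin_two, hA])
  rw [← hp, ← Matrix.eta_fin_two] at h
  obtain ⟨L, hL⟩ := h
  refine ⟨L.length, 1, one_ne_zero, fun i => (L.get i).2, fun i => (L.get i).1, ?_⟩
  have h1 : Matrix.diagonal ![LaurentPolynomial.C (1 : ℂ), LaurentPolynomial.C (1 : ℂ)⁻¹] =
      (1 : Matrix (Fin 2) (Fin 2) (LaurentPolynomial ℂ)) := by
    ext1 i j
    fin_cases i <;> fin_cases j <;> simp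
  rw [h1, one_mul, hL]
  congr 1
  change _ = List.ofFn (fun i => liftStep (L.get i))
  apply List.ext_get <;> simp
end
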